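/- arXiv:1205.4281 — 4 statements merged into one kernel-verified Lean document; each statement's English description precedes it below -/
import Mathlib

section
/- Suppose N(x) ≤ C·x for all x ≥ 1. Then for every complex s with Re s > 1: −ζ'(s)/ζ(s) = ∑_{k ∈ ℕ} ∑_{m ≥ 1} log(p k) · (p k)^{−ms}, the double series converging absolutely, and moreover ∫₁^∞ ψ(x) x^{−s−1} dx = −ζ'(s)/(s ζ(s)). -/
open MeasureTheory Real Filter Complex

/-- The generalized integer attached to an exponent vector `α`: `n(α) = ∏ k, (p k)^(α k)`. -/
noncomputable def beurlingInt (p : ℕ → ℝ) (α : ℕ →₀ ℕ) : ℝ :=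
  α.prod fun k e => (p k) ^ e

/-- Counting function of generalized integers: `N(x) = #{α : n(α) < x}`. -/
noncomputable def beurlingN (p : ℕ → ℝ) (x : ℝ) : ℕ :=
  Set.ncard {α : ℕ →₀ ℕ | beurlingInt p α < x}

/-- Chebyshev function `ψ(x) = ∑_{k, m ≥ 1, (p k)^m < x} log (p k)`. -/
noncomputable def beurlingPsi (p : ℕ → ℝ) (x : ℝ) : ℝ :=
  ∑' q : {q : ℕ × ℕ // 1 ≤ q.2 ∧ (p q.1) ^ q.2 < x}, Real.log (p (q : ℕ × ℕ).1)

/-- The Beurling zeta function `ζ(s) = ∑_α n(α)^{-s}`. -/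
noncomputable def beurlingZeta (p : ℕ → ℝ) (s : ℂ) : ℂ :=
  ∑' α : ℕ →₀ ℕ, (beurlingInt p α : ℂ) ^ (-s)

/-- The derivative of the Beurling zeta function, `ζ'(s) = -∑_α log(n(α)) n(α)^{-s}`. -/
noncomputable def beurlingZetaDeriv (p : ℕ → ℝ) (s : ℂ) : ℂ :=
  -∑' α : ℕ →₀ ℕ, (Real.log (beurlingInt p α) : ℂ) * (beurlingInt p α : ℂ) ^ (-s)

/-!
The monoid of generalized integers is the free commutative monoid `ℕ →₀ ℕ`, on which `n(α)^(-s)` is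
completely multiplicative and `log n(α)` completely additive. Dyadic blocks turn the bound on `N`
into absolute convergence of the Dirichlet series. Sieving by the primes in a finite set `S`
multiplies `ζ` by `∏ k ∈ S, (1 - (p k)^(-s))` and leaves the sum over the integers coprime to `S`,
which tends to the single term `n = 1`; hence `ζ(s) ≠ 0`. Expanding `log n = ∑ Λ(q)` over the prime
powers `q` dividing `n` gives `-ζ' = ζ · ∑ Λ(q) q^(-s)`. Finally `q^(-s) / s` is the integral of
`x^(-s-1)` over `x > q`, and summing these over `q` with weights `Λ(q)` gives the Mellin transform
of `ψ`.
-/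

section FreeMonoid

variable {ι : Type*}

/-- The prime powers of the free commutative monoid `ι →₀ ℕ`: the pair `(k, m)` with `1 ≤ m` stands
for the exponent vector `m • e_k`. The Dirichlet series of the von Mangoldt function is indexed by
this type. -/
abbrev PrimePower (ι : Type*) : Type _ := {q : ι × ℕ // 1 ≤ q.2}

namespace PrimePower

/-- The exponent vector `m • e_k` of the prime power `(k, m)`. -/
noncomputable def toFinsupp (q : PrimePower ι) : ι →₀ ℕ := Finsupp.single q.1.1 q.1.2

lemma toFinsupp_injective : Function.Injective (toFinsupp : PrimePower ι → ι →₀ ℕ) := by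
  rintro ⟨⟨k, m⟩, hm⟩ ⟨⟨k', m'⟩, hm'⟩ h
  obtain ⟨rfl, rfl⟩ | ⟨rfl, rfl⟩ := Finsupp.single_eq_single_iff _ _ _ _ |>.mp h
  · rfl
  · exact absurd hm (by simp)

lemma toFinsupp_le_iff {q : PrimePower ι} {α : ι →₀ ℕ} : q.toFinsupp ≤ α ↔ q.1.2 ≤ α q.1.1 :=
  Finsupp.single_le_iff

end PrimePower

/-- The exponent vectors vanishing on `S`, i.e. the elements of the free commutative monoid that are
coprime to all the primes in `S`; these are what the sieve leaves over. -/
def coprimeTo (S : Finset ι) : Set (ι →₀ ℕ) := {α | ∀ k ∈ S, α k = 0}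

lemma disjoint_coprimeTo_insert_image_single_add [DecidableEq ι] (S : Finset ι) (k : ι) :
    Disjoint (coprimeTo (insert k S)) ((Finsupp.single k 1 + ·) '' coprimeTo S) := by
  rw [Set.disjoint_left]
  rintro _ hα ⟨β, -, rfl⟩
  simpa using hα k (Finset.mem_insert_self k S)

lemma coprimeTo_eq_insert_union_image_single_add [DecidableEq ι] {S : Finset ι} {k : ι}
    (hk : k ∉ S) :
    coprimeTo S = coprimeTo (insert k S) ∪ (Finsupp.single k 1 + ·) '' coprimeTo S := by
  have single_apply_of_mem {j : ι} (hj : j ∈ S) : Finsupp.single k 1 j = 0 :=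
    Finsupp.single_eq_of_ne (ne_of_mem_of_not_mem hj hk)
  ext α
  constructor
  · intro hα
    by_cases hαk : α k = 0
    · exact .inl fun j hj => (Finset.mem_insert.mp hj).elim (fun h => h ▸ hαk) (hα j)
    · refine .inr ⟨α - Finsupp.single k 1, fun j hj => ?_, add_tsub_cancel_of_le ?_⟩
      · simp [hα j hj]
      · exact Finsupp.single_le_iff.mpr (Nat.one_le_iff_ne_zero.mpr hαk)
  · rintro (hα | ⟨β, hβ, rfl⟩) j hj
    · exact hα j (Finset.mem_insert_of_mem hj)
    · simp [single_apply_of_mem hj, hβ j hj]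

lemma tendsto_tsum_coprimeTo {E : Type*} [NormedAddCommGroup E] [CompleteSpace E]
    {f : (ι →₀ ℕ) → E} (hf : Summable (‖f ·‖)) :
    Tendsto (fun S : Finset ι => ∑' α : coprimeTo S, f α) atTop (nhds (f 0)) := by
  classical
  simp only [tsum_subtype]
  rw [← tsum_ite_eq 0 f]
  refine tendsto_tsum_of_dominated_convergence hf (fun α => tendsto_const_nhds.congr' ?_)
    (.of_forall fun S α => norm_indicator_le_norm_self f α)
  filter_upwards [eventually_ge_atTop α.support] with S hS
  have mem_iff : α ∈ coprimeTo S ↔ α = 0 :=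
    ⟨fun hα => Finsupp.support_eq_empty.mp <| Finset.eq_empty_of_forall_notMem fun k hk =>
      Finsupp.mem_support_iff.mp hk (hα k (hS hk)), fun hα k _ => by simp [hα]⟩
  simp only [Set.indicator_apply, mem_iff]

section EulerProduct

variable {𝕜 : Type*} [NormedField 𝕜] [CompleteSpace 𝕜] {f : AddChar (ι →₀ ℕ) 𝕜}

lemma tsum_coprimeTo_insert [DecidableEq ι] (hf : Summable (‖f ·‖)) {S : Finset ι} {k : ι}
    (hk : k ∉ S) :
    ∑' α : coprimeTo (insert k S), f α =
      (1 - f (Finsupp.single k 1)) * ∑' α : coprimeTo S, f α := by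
  have split : ∑' α : coprimeTo S, f α =
      ∑' α : coprimeTo (insert k S), f α +
        ∑' α : ((Finsupp.single k 1 + ·) '' coprimeTo S : Set (ι →₀ ℕ)), f α := by
    conv_lhs => rw [coprimeTo_eq_insert_union_image_single_add hk]
    exact (hf.of_norm.subtype _).tsum_union_disjoint
      (disjoint_coprimeTo_insert_image_single_add S k) (hf.of_norm.subtype _)
  have image : ∑' α : ((Finsupp.single k 1 + ·) '' coprimeTo S : Set (ι →₀ ℕ)), f α =
      f (Finsupp.single k 1) * ∑' α : coprimeTo S, f α := by
    rw [tsum_image f (add_right_injective _).injOn, ← tsum_mul_left]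
    simp only [AddChar.map_add_eq_mul]
  rw [one_sub_mul, ← image, eq_sub_iff_add_eq]
  exact split.symm

lemma prod_one_sub_mul_tsum (hf : Summable (‖f ·‖)) (S : Finset ι) :
    (∏ k ∈ S, (1 - f (Finsupp.single k 1))) * ∑' α, f α = ∑' α : coprimeTo S, f α := by
  classical
  induction S using Finset.induction_on with
  | empty =>
    have : coprimeTo (∅ : Finset ι) = Set.univ := by simp [coprimeTo]
    rw [Finset.prod_empty, one_mul, this, tsum_univ]
  | insert k S hk ih => rw [Finset.prod_insert hk, mul_assoc, ih, tsum_coprimeTo_insert hf hk]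

lemma tsum_addChar_ne_zero (hf : Summable (‖f ·‖)) : ∑' α, f α ≠ 0 := by
  intro hzero
  have hlim := tendsto_tsum_coprimeTo hf
  simp only [← prod_one_sub_mul_tsum hf, hzero, mul_zero, AddChar.map_zero_eq_one] at hlim
  exact zero_ne_one (tendsto_nhds_unique tendsto_const_nhds hlim)

end EulerProduct

section LogDerivative

-- This is the identity `Λ * 1 = log`.
lemma hasSum_primePower_le {M : Type*} [AddCommMonoid M] [TopologicalSpace M]
    (L : (ι →₀ ℕ) →+ M) (α : ι →₀ ℕ) :
    HasSum ({q : PrimePower ι | q.toFinsupp ≤ α}.indicator fun q => L (Finsupp.single q.1.1 1))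
      (L α) := by
  classical
  let weight : ι × ℕ → M := fun q => L (Finsupp.single q.1 1)
  let divisors : Finset (ι × ℕ) :=
    (α.support.sigma fun k => Finset.Icc 1 (α k)).map (Equiv.sigmaEquivProd ι ℕ).toEmbedding
  have mem_divisors (q : ι × ℕ) : q ∈ divisors ↔ 1 ≤ q.2 ∧ q.2 ≤ α q.1 := by
    simp only [divisors, Finset.mem_map_equiv, Equiv.sigmaEquivProd_symm_apply, Finset.mem_sigma,
      Finsupp.mem_support_iff, Finset.mem_Icc]
    omega
  have sum_divisors : ∑ q ∈ divisors, weight q = L α := by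
    simp only [divisors, weight, Finset.sum_map, Finset.sum_sigma, Equiv.coe_toEmbedding,
      Equiv.sigmaEquivProd_apply, Finset.sum_const, Nat.card_Icc, Nat.add_sub_cancel]
    simp only [← map_nsmul, ← map_sum, Finsupp.smul_single_one]
    exact congrArg L α.sum_single
  have hsum : HasSum ((divisors : Set (ι × ℕ)).indicator weight) (L α) :=
    sum_divisors ▸ hasSum_subtype_iff_indicator.mp (divisors.hasSum weight)
  have support_subset :
      Function.support ((divisors : Set (ι × ℕ)).indicator weight) ⊆ {q | 1 ≤ q.2} :=
    fun q hq => ((mem_divisors q).mp (Set.mem_of_indicator_ne_zero hq)).1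
  refine ((hasSum_subtype_iff_of_support_subset support_subset).mpr hsum).congr_fun fun q => ?_
  have hq : 1 ≤ q.1.2 := q.2
  simp [Set.indicator_apply, mem_divisors, hq, PrimePower.toFinsupp_le_iff, weight]

/-- Multiplying by a prime power: `(α, q) ↦ (q α, q)`. Its range consists of the pairs `(β, q)` with
`q ∣ β`, so it turns the double sum for `ζ · (-ζ'/ζ)` into a divisor sum. -/
noncomputable def mulPrimePower (z : (ι →₀ ℕ) × PrimePower ι) : (ι →₀ ℕ) × PrimePower ι :=
  (z.2.toFinsupp + z.1, z.2)

lemma mulPrimePower_injective : Function.Injective (mulPrimePower (ι := ι)) := by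
  rintro ⟨α, q⟩ ⟨β, r⟩ h
  obtain ⟨hαβ, rfl⟩ := Prod.mk.inj h
  exact congrArg (·, q) (add_left_cancel hαβ)

lemma mem_range_mulPrimePower {z : (ι →₀ ℕ) × PrimePower ι} :
    z ∈ Set.range mulPrimePower ↔ z.2.toFinsupp ≤ z.1 := by
  constructor
  · rintro ⟨w, rfl⟩
    exact le_self_add
  · exact fun h => ⟨(z.1 - z.2.toFinsupp, z.2), Prod.ext (add_tsub_cancel_of_le h) rfl⟩

variable {R : Type*} [NormedCommRing R] [CompleteSpace R]

theorem hasSum_addMonoidHom_mul_addChar {f : AddChar (ι →₀ ℕ) R} (L : (ι →₀ ℕ) →+ R)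
    (hf : Summable (‖f ·‖))
    (hL : Summable fun q : PrimePower ι => ‖L (Finsupp.single q.1.1 1) * f q.toFinsupp‖) :
    HasSum (fun α => L α * f α)
      ((∑' α, f α) * ∑' q : PrimePower ι, L (Finsupp.single q.1.1 1) * f q.toFinsupp) := by
  let G : (ι →₀ ℕ) × PrimePower ι → R := fun z =>
    {q : PrimePower ι | q.toFinsupp ≤ z.1}.indicator (fun q => L (Finsupp.single q.1.1 1)) z.2 *
      f z.1
  have G_mulPrimePower (z : (ι →₀ ℕ) × PrimePower ι) :
      G (mulPrimePower z) = f z.1 * (L (Finsupp.single z.2.1.1 1) * f z.2.toFinsupp) := by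
    simp only [G, mulPrimePower, Set.indicator_apply, Set.mem_ofPred_eq, le_self_add, if_true,
      AddChar.map_add_eq_mul]
    ring
  have G_eq_zero (z) (hz : z ∉ Set.range mulPrimePower) : G z = 0 := by
    simp [G, Set.indicator_apply, mem_range_mulPrimePower.not.mp hz]
  have hG : HasSum G
      ((∑' α, f α) * ∑' q : PrimePower ι, L (Finsupp.single q.1.1 1) * f q.toFinsupp) := by
    rw [← mulPrimePower_injective.hasSum_iff G_eq_zero, tsum_mul_tsum_of_summable_norm hf hL]
    exact (summable_mul_of_summable_norm hf hL).hasSum.congr_fun G_mulPrimePower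
  exact hG.prod_fiberwise fun α => (hasSum_primePower_le L α).mul_right (f α)

end LogDerivative

end FreeMonoid

section Counting

variable {ι : Type*} {n : ι → ℝ}

lemma nonneg_of_ncard_isBigO_rpow [Nonempty ι] (hfin : ∀ x, {i | n i < x}.Finite) {θ : ℝ}
    (hN : (fun x => ({i | n i < x}.ncard : ℝ)) =O[atTop] fun x => x ^ θ) : 0 ≤ θ := by
  by_contra! hθ
  have hlim : Tendsto (fun x => ({i | n i < x}.ncard : ℝ)) atTop (nhds 0) :=
    hN.trans_tendsto (by simpa using tendsto_rpow_neg_atTop (neg_pos.mpr hθ))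
  obtain ⟨i⟩ := ‹Nonempty ι›
  refine one_pos.not_ge (ge_of_tendsto hlim ?_)
  filter_upwards [eventually_gt_atTop (n i)] with x hx
  exact_mod_cast (Set.ncard_pos (hfin x)).mpr ⟨i, hx⟩

lemma summable_ncard_mul_dyadic {θ σ : ℝ} (hσ : θ < σ)
    (hN : (fun x => ({i | n i < x}.ncard : ℝ)) =O[atTop] fun x => x ^ θ) :
    Summable fun j : ℕ => ({i | n i < 2 ^ (j + 1)}.ncard : ℝ) * ((2 : ℝ) ^ j) ^ (-σ) := by
  have tendsto_dyadic : Tendsto (fun j : ℕ => (2 : ℝ) ^ (j + 1)) atTop atTop :=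
    (tendsto_pow_atTop_atTop_of_one_lt one_lt_two).comp (tendsto_add_atTop_nat 1)
  have geometric : Summable fun j : ℕ => (2 : ℝ) ^ θ * ((2 : ℝ) ^ (θ - σ)) ^ j :=
    (summable_geometric_of_lt_one (by positivity)
      (rpow_lt_one_of_one_lt_of_neg one_lt_two (sub_neg.mpr hσ))).mul_left _
  refine summable_of_isBigO_nat geometric
    (((hN.comp_tendsto tendsto_dyadic).mul (Asymptotics.isBigO_refl _ _)).congr_right fun j => ?_)
  simp only [Function.comp_apply]
  rw [← rpow_natCast, ← rpow_natCast, ← rpow_natCast, ← rpow_mul zero_le_two,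
    ← rpow_mul zero_le_two, ← rpow_mul zero_le_two, ← rpow_add two_pos, ← rpow_add two_pos]
  push_cast
  ring_nf

lemma summable_rpow_neg_of_ncard_isBigO (h1 : ∀ i, 1 ≤ n i) (hfin : ∀ x, {i | n i < x}.Finite)
    {θ σ : ℝ} (hσ : θ < σ) (hσ0 : 0 ≤ σ)
    (hN : (fun x => ({i | n i < x}.ncard : ℝ)) =O[atTop] fun x => x ^ θ) :
    Summable fun i => n i ^ (-σ) := by
  choose J le_n n_lt using fun i => exists_nat_pow_near (h1 i) one_lt_two
  have block_bounds {j : ℕ} {i : ι} (hi : J i = j) : 2 ^ j ≤ n i ∧ n i < 2 ^ (j + 1) := by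
    subst hi
    exact ⟨le_n i, n_lt i⟩
  have block_finite (j : ℕ) : Finite {i // J i = j} :=
    (hfin _).subset fun _ hi => (block_bounds hi).2
  have nonneg (i : ι) : 0 ≤ n i ^ (-σ) := rpow_nonneg (zero_le_one.trans (h1 i)) _
  have block_le (j : ℕ) : ∑' i : {i // J i = j}, n i ^ (-σ) ≤
      ({i | n i < 2 ^ (j + 1)}.ncard : ℝ) * ((2 : ℝ) ^ j) ^ (-σ) := by
    have := Fintype.ofFinite {i // J i = j}
    calc ∑' i : {i // J i = j}, n i ^ (-σ)
        ≤ ∑ _i : {i // J i = j}, ((2 : ℝ) ^ j) ^ (-σ) := by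
          rw [tsum_fintype]
          refine Finset.sum_le_sum fun i _ => ?_
          exact rpow_le_rpow_of_nonpos (by positivity) (block_bounds i.2).1 (neg_nonpos.mpr hσ0)
      _ = ({i | J i = j}.ncard : ℝ) * ((2 : ℝ) ^ j) ^ (-σ) := by
          rw [Finset.sum_const, nsmul_eq_mul, Finset.card_univ, ← Nat.card_eq_fintype_card]
          rfl
      _ ≤ _ := by
          gcongr
          exacts [hfin _, fun hi => (block_bounds hi).2]
  rw [← (Equiv.sigmaFiberEquiv J).summable_iff,
    summable_sigma_of_nonneg fun _ => by exact nonneg _]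
  exact ⟨fun _ => Summable.of_finite, (summable_ncard_mul_dyadic hσ hN).of_nonneg_of_le
    (fun _ => tsum_nonneg fun _ => nonneg _) block_le⟩

lemma summable_log_mul_rpow_neg (h1 : ∀ i, 1 ≤ n i) {σ τ : ℝ} (hστ : τ < σ)
    (hn : Summable fun i => n i ^ (-τ)) : Summable fun i => Real.log (n i) * n i ^ (-σ) := by
  have pos (i : ι) : 0 < n i := one_pos.trans_le (h1 i)
  refine (hn.mul_left (σ - τ)⁻¹).of_nonneg_of_le
    (fun i => mul_nonneg (log_nonneg (h1 i)) (rpow_nonneg (pos i).le _)) fun i => ?_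
  calc Real.log (n i) * n i ^ (-σ)
      ≤ n i ^ (σ - τ) / (σ - τ) * n i ^ (-σ) :=
        mul_le_mul_of_nonneg_right (log_le_rpow_div (pos i).le (sub_pos.mpr hστ))
          (rpow_nonneg (pos i).le _)
    _ = (σ - τ)⁻¹ * (n i ^ (σ - τ) * n i ^ (-σ)) := by ring
    _ = (σ - τ)⁻¹ * n i ^ (-τ) := by rw [← rpow_add (pos i)]; ring_nf

end Counting

section Mellin

variable {a : ℝ} {s : ℂ}

lemma integrableOn_Ioi_cpow_neg_sub_one (ha : 0 < a) (hs : 0 < s.re) :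
    IntegrableOn (fun x : ℝ => (x : ℂ) ^ (-s - 1)) (Set.Ioi a) :=
  integrableOn_Ioi_cpow_of_lt (by simp; linarith) ha

lemma integral_Ioi_cpow_neg_sub_one (ha : 0 < a) (hs : 0 < s.re) :
    ∫ x in Set.Ioi a, (x : ℂ) ^ (-s - 1) = (a : ℂ) ^ (-s) / s := by
  rw [integral_Ioi_cpow_of_lt (by simp; linarith) ha, sub_add_cancel, neg_div_neg_eq]

lemma integral_Ioi_norm_cpow_neg_sub_one (ha : 0 < a) (hs : 0 < s.re) :
    ∫ x : ℝ in Set.Ioi a, ‖(x : ℂ) ^ (-s - 1)‖ = ‖(a : ℂ) ^ (-s)‖ / s.re := by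
  have norm_eq : Set.EqOn (fun x : ℝ => ‖(x : ℂ) ^ (-s - 1)‖) (fun x => x ^ (-s.re - 1))
      (Set.Ioi a) := fun x hx => by
    simp [norm_cpow_eq_rpow_re_of_pos (ha.trans hx)]
  rw [setIntegral_congr_fun measurableSet_Ioi norm_eq, integral_Ioi_rpow_of_lt (by linarith) ha,
    norm_cpow_eq_rpow_re_of_pos ha, sub_add_cancel, neg_div_neg_eq, neg_re]

variable {ι : Type*} {n : ι → ℝ} {c : ι → ℂ}

lemma tsum_lt_mul_eq_tsum_indicator (g : ℝ → ℂ) (x : ℝ) :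
    (∑' i : {i // n i < x}, c i) * g x =
      ∑' i, (Set.Ioi (n i)).indicator (fun y => c i * g y) x := by
  rw [← tsum_mul_right]
  exact tsum_subtype {i | n i < x} fun i => c i * g x

theorem integral_tsum_lt_mul_cpow [Countable ι] {b : ℝ} (hb : 0 < b) (hbn : ∀ i, b ≤ n i)
    (hs : 0 < s.re) (hc : Summable fun i => ‖c i * (n i : ℂ) ^ (-s)‖) :
    ∫ x in Set.Ioi b, (∑' i : {i // n i < x}, c i) * (x : ℂ) ^ (-s - 1) =
      (∑' i, c i * (n i : ℂ) ^ (-s)) / s := by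
  have pos (i : ι) : 0 < n i := hb.trans_le (hbn i)
  have inter_eq (i : ι) : Set.Ioi b ∩ Set.Ioi (n i) = Set.Ioi (n i) :=
    Set.inter_eq_right.mpr (Set.Ioi_subset_Ioi (hbn i))
  let F : ι → ℝ → ℂ := fun i =>
    (Set.Ioi (n i)).indicator fun x : ℝ => c i * (x : ℂ) ^ (-s - 1)
  have integrable_F (i : ι) : IntegrableOn (F i) (Set.Ioi b) :=
    ((integrable_indicator_iff measurableSet_Ioi).mpr
      ((integrableOn_Ioi_cpow_neg_sub_one (pos i) hs).const_mul (c i))).integrableOn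
  have integral_F (i : ι) : ∫ x in Set.Ioi b, F i x = c i * (n i : ℂ) ^ (-s) / s := by
    rw [setIntegral_indicator measurableSet_Ioi, inter_eq, integral_const_mul,
      integral_Ioi_cpow_neg_sub_one (pos i) hs, mul_div_assoc]
  have integral_norm_F (i : ι) :
      ∫ x in Set.Ioi b, ‖F i x‖ = ‖c i * (n i : ℂ) ^ (-s)‖ / s.re := by
    simp only [F, norm_indicator_eq_indicator_norm, norm_mul]
    rw [setIntegral_indicator measurableSet_Ioi, inter_eq, integral_const_mul,
      integral_Ioi_norm_cpow_neg_sub_one (pos i) hs, mul_div_assoc]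
  simp only [tsum_lt_mul_eq_tsum_indicator (fun x : ℝ => (x : ℂ) ^ (-s - 1))]
  rw [← integral_tsum_of_summable_integral_norm integrable_F
    (by simpa only [integral_norm_F] using hc.div_const s.re)]
  simp only [integral_F, tsum_div_const]

end Mellin

section Beurling

lemma ofReal_pow_cpow_neg {x : ℝ} (hx : 0 ≤ x) (m : ℕ) (s : ℂ) :
    ((x ^ m : ℝ) : ℂ) ^ (-s) = (x : ℂ) ^ (-(m : ℂ) * s) := by
  rw [neg_mul_comm, cpow_nat_mul]
  induction m with
  | zero => simp
  | succ m ih => rw [pow_succ, ofReal_mul, mul_cpow_ofReal_nonneg (pow_nonneg hx m) hx, ih,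
      pow_succ]

variable {p : ℕ → ℝ}

lemma beurlingInt_zero : beurlingInt p 0 = 1 := Finsupp.prod_zero_index

lemma beurlingInt_add (α β : ℕ →₀ ℕ) :
    beurlingInt p (α + β) = beurlingInt p α * beurlingInt p β :=
  Finsupp.prod_add_index' (fun _ => pow_zero _) fun _ _ _ => pow_add _ _ _

lemma beurlingInt_single (k m : ℕ) : beurlingInt p (Finsupp.single k m) = p k ^ m :=
  Finsupp.prod_single_index (pow_zero _)

lemma beurlingInt_pos (hp : ∀ k, 0 < p k) (α : ℕ →₀ ℕ) : 0 < beurlingInt p α :=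
  Finset.prod_pos fun k _ => pow_pos (hp k) _

lemma one_le_beurlingInt (hp : ∀ k, 1 ≤ p k) (α : ℕ →₀ ℕ) : 1 ≤ beurlingInt p α :=
  Finset.one_le_prod fun k _ => one_le_pow₀ (hp k)

lemma pow_le_beurlingInt (hp : ∀ k, 1 ≤ p k) (α : ℕ →₀ ℕ) (k : ℕ) :
    p k ^ α k ≤ beurlingInt p α := by
  rw [← Finsupp.single_add_erase k α, beurlingInt_add, beurlingInt_single]
  simpa using le_mul_of_one_le_right (pow_nonneg (zero_le_one.trans (hp k)) _)
    (one_le_beurlingInt hp (α.erase k))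

lemma finite_setOf_beurlingInt_lt (hp : ∀ k, 1 < p k) (hptop : Tendsto p atTop atTop) (x : ℝ) :
    {α : ℕ →₀ ℕ | beurlingInt p α < x}.Finite := by
  have finite_primes : {k | p k < x}.Finite := by
    simpa [← Nat.cofinite_eq_atTop, eventually_cofinite] using hptop.eventually_ge_atTop x
  choose M hM using fun k => pow_unbounded_of_one_lt x (hp k)
  refine (finite_primes.toFinset.finsupp fun k => Finset.range (M k)).finite_toSet.subset
    fun α (hα : beurlingInt p α < x) => ?_
  have pow_lt (k : ℕ) : p k ^ α k < x := (pow_le_beurlingInt (fun k => (hp k).le) α k).trans_lt hα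
  rw [Finset.mem_coe, Finset.mem_finsupp_iff]
  refine ⟨fun k hk => ?_, fun k _ => ?_⟩
  · rw [Set.Finite.mem_toFinset]
    exact (le_self_pow₀ (hp k).le (Finsupp.mem_support_iff.mp hk)).trans_lt (pow_lt k)
  · exact Finset.mem_range.mpr ((pow_lt_pow_iff_right₀ (hp k)).mp ((pow_lt k).trans (hM k)))

/-- The completely multiplicative function `α ↦ n(α)^(-s)`. As `ℕ →₀ ℕ` is written additively, it
is encoded as an additive character. -/
noncomputable def beurlingChar (hp : ∀ k, 0 < p k) (s : ℂ) : AddChar (ℕ →₀ ℕ) ℂ where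
  toFun α := (beurlingInt p α : ℂ) ^ (-s)
  map_zero_eq_one' := by simp [beurlingInt_zero]
  map_add_eq_mul' α β := by
    rw [beurlingInt_add, ofReal_mul,
      mul_cpow_ofReal_nonneg (beurlingInt_pos hp α).le (beurlingInt_pos hp β).le]

/-- The completely additive function `α ↦ log n(α)`, with complex values. -/
noncomputable def beurlingLog (hp : ∀ k, 0 < p k) : (ℕ →₀ ℕ) →+ ℂ where
  toFun α := Real.log (beurlingInt p α)
  map_zero' := by simp [beurlingInt_zero]
  map_add' α β := by
    rw [beurlingInt_add, log_mul (beurlingInt_pos hp α).ne' (beurlingInt_pos hp β).ne', ofReal_add]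

lemma norm_beurlingChar (hp : ∀ k, 0 < p k) (s : ℂ) (α : ℕ →₀ ℕ) :
    ‖beurlingChar hp s α‖ = beurlingInt p α ^ (-s.re) :=
  norm_cpow_eq_rpow_re_of_pos (beurlingInt_pos hp α) _

lemma beurlingChar_toFinsupp (hp : ∀ k, 0 < p k) (s : ℂ) (q : PrimePower ℕ) :
    beurlingChar hp s q.toFinsupp = (p q.1.1 : ℂ) ^ (-(q.1.2 : ℂ) * s) := by
  rw [← ofReal_pow_cpow_neg (hp _).le, ← beurlingInt_single]
  rfl

lemma beurlingLog_single_one (hp : ∀ k, 0 < p k) (k : ℕ) :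
    beurlingLog hp (Finsupp.single k 1) = Real.log (p k) := by
  simp [beurlingLog, beurlingInt_single]

lemma beurlingPsi_eq_tsum_primePower (x : ℝ) :
    (beurlingPsi p x : ℂ) =
      ∑' q : {q : PrimePower ℕ // p q.1.1 ^ q.1.2 < x}, (Real.log (p q.1.1.1) : ℂ) := by
  rw [beurlingPsi, ofReal_tsum]
  exact ((Equiv.subtypeSubtypeEquivSubtypeInter (fun q : ℕ × ℕ => 1 ≤ q.2)
    fun q => p q.1 ^ q.2 < x).tsum_eq fun q => (Real.log (p q.1.1) : ℂ)).symm

lemma summable_log_mul_beurlingChar (hp : ∀ k, 1 < p k) {s : ℂ}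
    (hs : Summable fun α => Real.log (beurlingInt p α) * beurlingInt p α ^ (-s.re)) :
    Summable fun q : PrimePower ℕ =>
      ‖(Real.log (p q.1.1) : ℂ) * (p q.1.1 : ℂ) ^ (-(q.1.2 : ℂ) * s)‖ := by
  have pos (k : ℕ) : 0 < p k := one_pos.trans (hp k)
  refine (hs.comp_injective PrimePower.toFinsupp_injective).of_nonneg_of_le
    (fun _ => norm_nonneg _) fun q => ?_
  have log_le : Real.log (p q.1.1) ≤ Real.log (beurlingInt p q.toFinsupp) := by
    rw [PrimePower.toFinsupp, beurlingInt_single]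
    exact log_le_log (pos _) (le_self_pow₀ (hp _).le (Nat.one_le_iff_ne_zero.mp q.2))
  rw [norm_mul, ← beurlingChar_toFinsupp pos, norm_beurlingChar,
    norm_real,
    norm_of_nonneg (log_nonneg (hp _).le)]
  exact mul_le_mul_of_nonneg_right log_le (rpow_nonneg (beurlingInt_pos pos _).le _)

lemma beurlingZeta_mul_tsum_primePower (hp : ∀ k, 0 < p k) {s : ℂ}
    (hs : Summable fun α => ‖beurlingChar hp s α‖)
    (hΛ : Summable fun q : PrimePower ℕ =>
      ‖(Real.log (p q.1.1) : ℂ) * (p q.1.1 : ℂ) ^ (-(q.1.2 : ℂ) * s)‖) :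
    beurlingZeta p s *
        ∑' q : PrimePower ℕ, (Real.log (p q.1.1) : ℂ) * (p q.1.1 : ℂ) ^ (-(q.1.2 : ℂ) * s) =
      -beurlingZetaDeriv p s := by
  simp only [← beurlingLog_single_one hp, ← beurlingChar_toFinsupp hp] at hΛ ⊢
  rw [beurlingZetaDeriv, neg_neg]
  exact (hasSum_addMonoidHom_mul_addChar (beurlingLog hp) hs hΛ).tsum_eq.symm

lemma integral_beurlingPsi_mul_cpow (hp : ∀ k, 1 ≤ p k) {s : ℂ} (hs : 0 < s.re)
    (hΛ : Summable fun q : PrimePower ℕ =>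
      ‖(Real.log (p q.1.1) : ℂ) * (p q.1.1 : ℂ) ^ (-(q.1.2 : ℂ) * s)‖) :
    ∫ x in Set.Ioi (1 : ℝ), (beurlingPsi p x : ℂ) * (x : ℂ) ^ (-s - 1) =
      (∑' q : PrimePower ℕ, (Real.log (p q.1.1) : ℂ) * (p q.1.1 : ℂ) ^ (-(q.1.2 : ℂ) * s)) / s := by
  simp only [beurlingPsi_eq_tsum_primePower,
    ← ofReal_pow_cpow_neg (zero_le_one.trans (hp _))] at hΛ ⊢
  exact integral_tsum_lt_mul_cpow (n := fun q : PrimePower ℕ => p q.1.1 ^ q.1.2)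
    (c := fun q => (Real.log (p q.1.1) : ℂ)) one_pos (fun q => one_le_pow₀ (hp q.1.1)) hs hΛ

end Beurling

theorem log_deriv_zeta_and_psi_mellin_general {p : ℕ → ℝ} (hp : ∀ k, 1 < p k)
    (hptop : Tendsto p atTop atTop) {θ : ℝ}
    (hN : (fun x => (beurlingN p x : ℝ)) =O[atTop] fun x => x ^ θ) {s : ℂ} (hs : θ < s.re) :
    Summable (fun q : PrimePower ℕ =>
      ‖(Real.log (p q.1.1) : ℂ) * (p q.1.1 : ℂ) ^ (-(q.1.2 : ℂ) * s)‖) ∧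
    -beurlingZetaDeriv p s / beurlingZeta p s =
      ∑' q : PrimePower ℕ, (Real.log (p q.1.1) : ℂ) * (p q.1.1 : ℂ) ^ (-(q.1.2 : ℂ) * s) ∧
    (∫ x in Set.Ioi (1 : ℝ), (beurlingPsi p x : ℂ) * (x : ℂ) ^ (-s - 1)) =
      -beurlingZetaDeriv p s / (s * beurlingZeta p s) := by
  have pos (k : ℕ) : 0 < p k := one_pos.trans (hp k)
  have one_le := one_le_beurlingInt fun k => (hp k).le
  have hfin := finite_setOf_beurlingInt_lt hp hptop
  have hθ : 0 ≤ θ := nonneg_of_ncard_isBigO_rpow hfin hN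
  have summable_rpow {σ : ℝ} (hσ : θ < σ) : Summable fun α => beurlingInt p α ^ (-σ) :=
    summable_rpow_neg_of_ncard_isBigO one_le hfin hσ (hθ.trans hσ.le) hN
  have hζ : Summable fun α => ‖beurlingChar pos s α‖ := by
    simpa only [norm_beurlingChar] using summable_rpow hs
  obtain ⟨τ, hτ, hτs⟩ := exists_between hs
  have hΛ := summable_log_mul_beurlingChar hp
    (summable_log_mul_rpow_neg one_le hτs (summable_rpow hτ))
  have zeta_ne_zero : beurlingZeta p s ≠ 0 := tsum_addChar_ne_zero hζ
  rw [← beurlingZeta_mul_tsum_primePower pos hζ hΛ,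
    integral_beurlingPsi_mul_cpow (fun k => (hp k).le) (hθ.trans_lt hs) hΛ, mul_comm s,
    mul_div_mul_left _ _ zeta_ne_zero, mul_div_cancel_left₀ _ zeta_ne_zero]
  exact ⟨hΛ, rfl, rfl⟩

/-- If `N(x) ≤ C x`, then for `Re s > 1` one has
`-ζ'(s)/ζ(s) = ∑_{k, m ≥ 1} log(p k) (p k)^{-ms}` (absolutely convergent) and
`∫₁^∞ ψ(x) x^{-s-1} dx = -ζ'(s)/(s ζ(s))`. -/
theorem log_deriv_zeta_and_psi_mellin
    (p : ℕ → ℝ) (hmono : Monotone p) (hp1 : 1 < p 0) (hptop : Tendsto p atTop atTop)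
    (C : ℝ) (hC : ∀ x : ℝ, 1 ≤ x → (beurlingN p x : ℝ) ≤ C * x) :
    ∀ s : ℂ, 1 < s.re →
      Summable (fun q : {q : ℕ × ℕ // 1 ≤ q.2} =>
        ‖(Real.log (p (q : ℕ × ℕ).1) : ℂ) * (p (q : ℕ × ℕ).1 : ℂ) ^ (-((q : ℕ × ℕ).2 : ℂ) * s)‖) ∧
      -beurlingZetaDeriv p s / beurlingZeta p s =
        ∑' q : {q : ℕ × ℕ // 1 ≤ q.2},
          (Real.log (p (q : ℕ × ℕ).1) : ℂ) * (p (q : ℕ × ℕ).1 : ℂ) ^ (-((q : ℕ × ℕ).2 : ℂ) * s) ∧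
      (∫ x in Set.Ioi (1 : ℝ), (beurlingPsi p x : ℂ) * (x : ℂ) ^ (-s - 1)) =
        -beurlingZetaDeriv p s / (s * beurlingZeta p s) := by
  intro s hs
  refine log_deriv_zeta_and_psi_mellin_general (fun k => hp1.trans_le (hmono k.zero_le)) hptop
    (.of_bound C ?_) hs
  filter_upwards [eventually_ge_atTop 1] with x hx
  simpa [abs_of_nonneg (zero_le_one.trans hx)] using hC x hx
end

section
/- Suppose a > 0 and the function E₁ defined by E₁(u) = e^{−u} N(e^u) − a for u > 0 and E₁(u) = 0 for u ≤ 0 is integrable on ℝ; let Ê₁(t) = ∫_ℝ E₁(u) e^{−itu} du, and let c > 0 be such that (1 + it)(it Ê₁(t) + a) ≠ 0 for all |t| < 3c. Then for every smooth compactly supported φ : ℝ → ℂ with support contained in (−c, c), there exists an integrable function f : ℝ → ℂ such that its Fourier transform f̂(t) = ∫_ℝ f(u) e^{−itu} du satisfies f̂(t) · (1 + it)(it Ê₁(t) + a) = φ(t) for all |t| < c, and f̂(t) = 0 for |t| ≥ c. -/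
open MeasureTheory Real Filter Complex

/-- The error term `E₁(u) = e^{-u} N(e^u) - a` for `u > 0`, and `0` for `u ≤ 0`. -/
noncomputable def beurlingE₁ (p : ℕ → ℝ) (a : ℝ) (u : ℝ) : ℝ :=
  if 0 < u then Real.exp (-u) * (beurlingN p (Real.exp u) : ℝ) - a else 0

/-- Fourier transform `Ê₁(t) = ∫ E₁(u) e^{-itu} du`. -/
noncomputable def beurlingE₁FT (p : ℕ → ℝ) (a : ℝ) (t : ℝ) : ℂ :=
  ∫ u : ℝ, (beurlingE₁ p a u : ℂ) * Complex.exp (-Complex.I * t * u)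

/-!
The Fourier transforms of integrable functions form an algebra `A` under pointwise multiplication,
since convolution maps `L¹ × L¹` to `L¹`. Smooth compactly supported functions lie in `A`, so
membership in `A` of a compactly supported function is a local property, and it suffices to show
that `1 / F` lies locally in `A` wherever `F` lies locally in `A` and does not vanish.

After a translation and a normalisation, `F = 𝓕 f` near `0` with `∫ f = 1`. Choose an integrable
`h` with `𝓕 h = 1` near `0`. As `δ → 0` the dilations `f_δ` form an approximate identity, so some
`r = h - f_δ ⋆ h` satisfies `‖r‖₁ < 1`, and the Neumann series `∑ rⁿ ⋆ h` converges in `L¹` to a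
function with Fourier transform `𝓕 h / (1 - 𝓕 r)`. Near `0` this equals `1 / 𝓕 f (δ ·)`, and undoing
the dilation gives `1 / F`.
-/

open ContinuousLinearMap (mul)
open scoped FourierTransform Convolution Topology ContDiff

section Convolution

variable {𝕜 G E E' E'' : Type*} [NontriviallyNormedField 𝕜]
  [NormedAddCommGroup E] [NormedAddCommGroup E'] [NormedAddCommGroup E'']
  [NormedSpace 𝕜 E] [NormedSpace 𝕜 E'] [NormedSpace 𝕜 E''] [NormedSpace ℝ E'']
  [AddGroup G] [MeasurableSpace G] [MeasurableAdd₂ G] [MeasurableNeg G]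
  {μ : Measure G} [SFinite μ] [μ.IsAddRightInvariant]

lemma integral_norm_convolution_le (L : E →L[𝕜] E' →L[𝕜] E'') {f : G → E} {g : G → E'}
    (hf : Integrable f μ) (hg : Integrable g μ) :
    ∫ x, ‖(f ⋆[L, μ] g) x‖ ∂μ ≤ ‖L‖ * (∫ x, ‖f x‖ ∂μ) * ∫ x, ‖g x‖ ∂μ :=
  calc ∫ x, ‖(f ⋆[L, μ] g) x‖ ∂μ
    _ ≤ ∫ x, ‖L‖ * ((fun u ↦ ‖f u‖) ⋆[mul ℝ ℝ, μ] (fun u ↦ ‖g u‖)) x ∂μ := by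
        refine integral_mono_ae (hf.integrable_convolution L hg).norm
          ((hf.norm.integrable_convolution _ hg.norm).const_mul _) ?_
        filter_upwards [hf.norm.ae_convolution_exists (mul ℝ ℝ) hg.norm] with x hx
        rw [convolution_def, convolution_def, ← integral_const_mul]
        refine norm_integral_le_of_norm_le (hx.integrable.const_mul _) (.of_forall fun u ↦ ?_)
        simpa only [ContinuousLinearMap.mul_apply', mul_assoc] using L.le_opNorm₂ (f u) (g (x - u))
    _ = ‖L‖ * (∫ x, ‖f x‖ ∂μ) * ∫ x, ‖g x‖ ∂μ := by
        rw [integral_const_mul, integral_convolution (mul ℝ ℝ) hf.norm hg.norm,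
          ContinuousLinearMap.mul_apply', mul_assoc]

variable [NormedSpace ℝ E'] (L : E →L[𝕜] E' →L[𝕜] E') {r : G → E} {f : G → E'}

lemma integrable_iterate_convolution (hr : Integrable r μ) (hf : Integrable f μ) (n : ℕ) :
    Integrable ((r ⋆[L, μ] ·)^[n] f) μ := by
  induction n with
  | zero => exact hf
  | succ n ih =>
    rw [Function.iterate_succ_apply']
    exact hr.integrable_convolution L ih

lemma integral_norm_iterate_convolution_le (hr : Integrable r μ) (hf : Integrable f μ) (n : ℕ) :
    ∫ x, ‖((r ⋆[L, μ] ·)^[n] f) x‖ ∂μ ≤ (‖L‖ * ∫ x, ‖r x‖ ∂μ) ^ n * ∫ x, ‖f x‖ ∂μ := by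
  induction n with
  | zero => simp
  | succ n ih =>
    rw [Function.iterate_succ_apply', pow_succ', mul_assoc _ (_ ^ n)]
    exact (integral_norm_convolution_le L hr (integrable_iterate_convolution L hr hf n)).trans
      (by gcongr)

end Convolution

section Dilation

variable {V E : Type*} [NormedAddCommGroup V] [NormedSpace ℝ V] [FiniteDimensional ℝ V]
  [MeasurableSpace V] [BorelSpace V] {μ : Measure V} [μ.IsAddHaarMeasure]
  [NormedAddCommGroup E] [NormedSpace ℝ E] {δ : ℝ}

/-- The dilation `f_δ(u) = |δ|^{-d} f(u / δ)` with `d = dim V`, which preserves integrals; as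
`δ → 0` its mass concentrates at the origin. -/
noncomputable def dilate (δ : ℝ) (f : V → E) (u : V) : E :=
  |δ ^ Module.finrank ℝ V|⁻¹ • f (δ⁻¹ • u)

lemma integrable_dilate (hδ : δ ≠ 0) {f : V → E} (hf : Integrable f μ) :
    Integrable (dilate δ f) μ :=
  ((integrable_comp_smul_iff μ f (inv_ne_zero hδ)).2 hf).smul _

lemma integral_dilate (hδ : δ ≠ 0) (f : V → E) : ∫ u, dilate δ f u ∂μ = ∫ u, f u ∂μ := by
  have : |δ ^ Module.finrank ℝ V| ≠ 0 := by positivity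
  simp_rw [dilate, integral_smul, Measure.integral_comp_inv_smul, inv_smul_smul₀ this]

lemma integral_norm_dilate_mul (hδ : δ ≠ 0) (f : V → E) (k : V → ℝ) :
    ∫ u, ‖dilate δ f u‖ * k u ∂μ = ∫ u, ‖f u‖ * k (δ • u) ∂μ := by
  rw [← integral_dilate hδ fun u ↦ ‖f u‖ * k (δ • u)]
  simp [dilate, norm_smul, smul_inv_smul₀ hδ, mul_assoc]

end Dilation

section Modulus

variable {V E E' 𝕜 : Type*} [NormedAddCommGroup V] [MeasurableSpace V] {μ : Measure V}
  [NormedAddCommGroup E]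

/-- The `L¹` modulus of continuity `u ↦ ‖h(· - u) - h‖₁`. -/
noncomputable def l1Modulus (μ : Measure V) (h : V → E) (u : V) : ℝ :=
  ∫ x, ‖h (x - u) - h x‖ ∂μ

lemma l1Modulus_zero (h : V → E) : l1Modulus μ h 0 = 0 := by simp [l1Modulus]

lemma l1Modulus_nonneg (h : V → E) (u : V) : 0 ≤ l1Modulus μ h u :=
  integral_nonneg fun _ ↦ norm_nonneg _

variable [BorelSpace V] [μ.IsAddHaarMeasure]

lemma l1Modulus_le {h : V → E} (hh : Integrable h μ) (u : V) :
    l1Modulus μ h u ≤ 2 * ∫ x, ‖h x‖ ∂μ :=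
  calc l1Modulus μ h u
    _ ≤ ∫ x, (‖h (x - u)‖ + ‖h x‖) ∂μ :=
        integral_mono ((hh.comp_sub_right u).sub hh).norm
          ((hh.comp_sub_right u).norm.add hh.norm) fun x ↦ norm_sub_le _ _
    _ = 2 * ∫ x, ‖h x‖ ∂μ := by
        rw [integral_add (hh.comp_sub_right u).norm hh.norm,
          integral_sub_right_eq_self (fun x ↦ ‖h x‖), two_mul]

variable [NormedSpace ℝ V] [FiniteDimensional ℝ V]

lemma continuous_l1Modulus {h : V → E} (hh : Integrable h μ) : Continuous (l1Modulus μ h) := by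
  let H : Lp E 1 μ := hh.toL1 h
  have hdist (u : V) : l1Modulus μ h u = dist (DomAddAct.mk (-u) +ᵥ H) H := by
    have hshift : DomAddAct.mk (-u) +ᵥ H = (hh.comp_sub_right u).toL1 fun x ↦ h (x - u) := by
      refine (DomAddAct.mk_vadd_toLp _ _).trans ?_
      simp only [vadd_eq_add, neg_add_eq_sub]
      rfl
    rw [hshift, L1.dist_eq_integral_dist]
    refine integral_congr_ae ?_
    filter_upwards [hh.coeFn_toL1, (hh.comp_sub_right u).coeFn_toL1] with x hx hxu
    rw [hx, hxu, dist_eq_norm]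
  have : Fact ((1 : ENNReal) ≠ ⊤) := ⟨ENNReal.one_ne_top⟩
  rw [funext hdist]
  exact ((DomAddAct.continuous_mk.comp continuous_neg).vadd continuous_const).dist continuous_const

variable [NormedAddCommGroup E'] [NormedSpace ℝ E'] [RCLike 𝕜]

lemma integral_norm_convolution_sub_le {f h : V → 𝕜} (hf : Integrable f μ)
    (hh : Integrable h μ) :
    ∫ x, ‖(f ⋆[mul 𝕜 𝕜, μ] h) x - (∫ u, f u ∂μ) * h x‖ ∂μ ≤
      ∫ u, ‖f u‖ * l1Modulus μ h u ∂μ := by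
  have hconv : Integrable (fun p : V × V ↦ f p.2 * h (p.1 - p.2)) (μ.prod μ) :=
    hf.convolution_integrand (mul 𝕜 𝕜) hh
  have hprod : Integrable (fun p : V × V ↦ f p.2 * h p.1) (μ.prod μ) := (hf.mul_prod hh).swap
  have hdiff : Integrable (fun p : V × V ↦ ‖f p.2 * (h (p.1 - p.2) - h p.1)‖) (μ.prod μ) := by
    simp only [mul_sub]
    exact (hconv.sub hprod).norm
  calc ∫ x, ‖(f ⋆[mul 𝕜 𝕜, μ] h) x - (∫ u, f u ∂μ) * h x‖ ∂μ
    _ ≤ ∫ x, ∫ u, ‖f u * (h (x - u) - h x)‖ ∂μ ∂μ := by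
        refine integral_mono_ae ((hf.integrable_convolution _ hh).sub (hh.const_mul _)).norm
          hdiff.integral_prod_left ?_
        filter_upwards [hconv.prod_right_ae] with x hx
        have heq : (f ⋆[mul 𝕜 𝕜, μ] h) x - (∫ u, f u ∂μ) * h x =
            ∫ u, f u * (h (x - u) - h x) ∂μ := by
          simp_rw [mul_sub, ← integral_mul_const]
          exact (integral_sub hx (hf.mul_const _)).symm
        rw [heq]
        exact norm_integral_le_integral_norm _
    _ = ∫ u, ∫ x, ‖f u * (h (x - u) - h x)‖ ∂μ ∂μ := integral_integral_swap hdiff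
    _ = ∫ u, ‖f u‖ * l1Modulus μ h u ∂μ := by simp_rw [norm_mul, integral_const_mul, l1Modulus]

lemma tendsto_integral_norm_dilate_mul_l1Modulus {f : V → E'} {h : V → E} (hf : Integrable f μ)
    (hh : Integrable h μ) :
    Tendsto (fun δ : ℝ ↦ ∫ u, ‖dilate δ f u‖ * l1Modulus μ h u ∂μ) (𝓝[≠] 0) (𝓝 0) := by
  have hcont : ContinuousAt (fun δ : ℝ ↦ ∫ u, ‖f u‖ * l1Modulus μ h (δ • u) ∂μ) 0 := by
    have hω := continuous_l1Modulus hh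
    refine continuousAt_of_dominated (bound := fun u ↦ ‖f u‖ * (2 * ∫ x, ‖h x‖ ∂μ))
      (.of_forall fun δ ↦ ?_) (.of_forall fun δ ↦ .of_forall fun u ↦ ?_)
      (hf.norm.mul_const _) (.of_forall fun u ↦ by fun_prop)
    · exact hf.1.norm.mul (by fun_prop)
    · rw [norm_mul, norm_norm, norm_of_nonneg (l1Modulus_nonneg h _)]
      gcongr
      exact l1Modulus_le hh _
  have hlim := hcont.tendsto.mono_left (nhdsWithin_le_nhds (s := {0}ᶜ))
  simp only [zero_smul, l1Modulus_zero, mul_zero, integral_zero] at hlim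
  refine hlim.congr' ?_
  filter_upwards [self_mem_nhdsWithin] with δ hδ
  exact (integral_norm_dilate_mul hδ f _).symm

lemma exists_integral_norm_sub_dilate_convolution_lt {f h : V → 𝕜} (hf : Integrable f μ)
    (hf1 : ∫ u, f u ∂μ = 1) (hh : Integrable h μ) {ε : ℝ} (hε : 0 < ε) :
    ∃ δ : ℝ, δ ≠ 0 ∧ ∫ x, ‖h x - (dilate δ f ⋆[mul 𝕜 𝕜, μ] h) x‖ ∂μ < ε := by
  obtain ⟨δ, hlt, hδ⟩ := ((tendsto_integral_norm_dilate_mul_l1Modulus hf hh).eventually_lt_const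
    hε |>.and self_mem_nhdsWithin).exists
  refine ⟨δ, hδ, lt_of_le_of_lt ?_ hlt⟩
  simpa only [integral_dilate hδ, hf1, one_mul, norm_sub_rev] using
    integral_norm_convolution_sub_le (integrable_dilate hδ hf) hh

end Modulus

section FourierIntegral

variable {V E : Type*} [NormedAddCommGroup V] [InnerProductSpace ℝ V] [MeasurableSpace V]
  [BorelSpace V] [FiniteDimensional ℝ V] [NormedAddCommGroup E] [NormedSpace ℂ E]

lemma norm_fourier_le_integral_norm (f : V → E) (w : V) : ‖𝓕 f w‖ ≤ ∫ x, ‖f x‖ :=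
  VectorFourier.norm_fourierIntegral_le_integral_norm _ _ _ f w

lemma fourier_sub {f g : V → E} (hf : Integrable f) (hg : Integrable g) :
    𝓕 (f - g) = 𝓕 f - 𝓕 g := by
  ext w
  simp only [fourier_eq, Pi.sub_apply, smul_sub]
  exact integral_sub ((fourierIntegral_convergent_iff w).2 hf)
    ((fourierIntegral_convergent_iff w).2 hg)

lemma fourier_iterate_convolution {r f : V → ℂ} (hr : Integrable r) (hf : Integrable f) (n : ℕ)
    (w : V) : 𝓕 ((r ⋆[mul ℂ ℂ] ·)^[n] f) w = 𝓕 r w ^ n * 𝓕 f w := by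
  induction n with
  | zero => simp
  | succ n ih =>
    rw [Function.iterate_succ_apply',
      fourier_mul_convolution_eq hr (integrable_iterate_convolution _ hr hf n), ih, pow_succ',
      mul_assoc]

lemma exists_hasSum_fourier [CompleteSpace E] {f : ℕ → V → E} (hf : ∀ n, Integrable (f n))
    (hsum : Summable fun n ↦ ∫ x, ‖f n x‖) :
    ∃ g : V → E, Integrable g ∧ ∀ w, HasSum (fun n ↦ 𝓕 (f n) w) (𝓕 g w) := by
  have hL1 : Summable fun n ↦ (hf n).toL1 (f n) :=
    .of_norm <| hsum.congr fun n ↦ (L1.norm_of_fun_eq_integral_norm (hf n)).symm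
  refine ⟨_, L1.integrable_coeFn (∑' n, (hf n).toL1 (f n)), fun w ↦ ?_⟩
  have hcongr (n : ℕ) : 𝓕 (f n) w = 𝓕 ⇑((hf n).toL1 (f n)) w :=
    fourier_congr_ae (hf n).coeFn_toL1.symm w
  simp_rw [hcongr]
  exact (BoundedContinuousFunction.evalCLM ℂ w).hasSum
    ((Lp.fourierTransformCLM V E).hasSum hL1.hasSum)

lemma fourier_dilate {δ : ℝ} (hδ : δ ≠ 0) (f : V → E) (w : V) :
    𝓕 (dilate δ f) w = 𝓕 f (δ • w) := by
  rw [fourier_eq, fourier_eq, ← integral_dilate hδ fun u ↦ 𝐞 (-inner ℝ u (δ • w)) • f u]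
  simp_rw [dilate, real_inner_smul_left, real_inner_smul_right, inv_mul_cancel_left₀ hδ,
    smul_comm (𝐞 _)]

end FourierIntegral

section FourierAlgebra

variable {V : Type*} [NormedAddCommGroup V] [InnerProductSpace ℝ V] [MeasurableSpace V]
  [BorelSpace V] [FiniteDimensional ℝ V] {F G f : V → ℂ} {t : V}

/-- The Fourier algebra `A(V)`: Fourier transforms of integrable functions on `V`. -/
def MemFourierAlgebra (F : V → ℂ) : Prop :=
  ∃ f : V → ℂ, Integrable f ∧ 𝓕 f = F

/-- Local membership in the Fourier algebra: the germ of `F` at `t` is that of an element of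
`A(V)`. -/
def MemFourierAlgebraAt (F : V → ℂ) (t : V) : Prop :=
  ∃ G, MemFourierAlgebra G ∧ G =ᶠ[𝓝 t] F

namespace MemFourierAlgebra

lemma memFourierAlgebraAt (hF : MemFourierAlgebra F) (t : V) : MemFourierAlgebraAt F t :=
  ⟨F, hF, .rfl⟩

lemma mul (hF : MemFourierAlgebra F) (hG : MemFourierAlgebra G) :
    MemFourierAlgebra (F * G) := by
  obtain ⟨f, hf, rfl⟩ := hF
  obtain ⟨g, hg, rfl⟩ := hG
  exact ⟨_, hf.integrable_convolution (.mul ℂ ℂ) hg, funext (fourier_mul_convolution_eq hf hg)⟩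

lemma add (hF : MemFourierAlgebra F) (hG : MemFourierAlgebra G) :
    MemFourierAlgebra (F + G) := by
  obtain ⟨f, hf, rfl⟩ := hF
  obtain ⟨g, hg, rfl⟩ := hG
  exact ⟨f + g, hf.add hg,
    VectorFourier.fourierIntegral_add continuous_fourierChar (innerSL ℝ).continuous₂ hf hg⟩

lemma sub (hF : MemFourierAlgebra F) (hG : MemFourierAlgebra G) :
    MemFourierAlgebra (F - G) := by
  obtain ⟨f, hf, rfl⟩ := hF
  obtain ⟨g, hg, rfl⟩ := hG
  exact ⟨f - g, hf.sub hg, fourier_sub hf hg⟩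

lemma of_contDiff (hF : ContDiff ℝ ∞ F) (hsupp : HasCompactSupport F) :
    MemFourierAlgebra F := by
  let φ : SchwartzMap V ℂ := hsupp.toSchwartzMap hF
  refine ⟨⇑(𝓕⁻ φ : SchwartzMap V ℂ), SchwartzMap.integrable _, ?_⟩
  rw [← SchwartzMap.fourier_coe, FourierTransform.fourier_fourierInv_eq]
  rfl

lemma comp_add_right (hF : MemFourierAlgebra F) (s : V) :
    MemFourierAlgebra fun w ↦ F (w + s) := by
  obtain ⟨f, hf, rfl⟩ := hF
  refine ⟨fun u ↦ 𝐞 (-inner ℝ u s) • f u, (fourierIntegral_convergent_iff s).2 hf, ?_⟩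
  ext w
  simp_rw [fourier_eq, smul_smul, ← AddChar.map_add_eq_mul, inner_add_right, neg_add]

lemma div_one_sub_fourier {r : V → ℂ} (hF : MemFourierAlgebra F) (hr : Integrable r)
    (hr1 : ∫ u, ‖r u‖ < 1) : MemFourierAlgebra fun w ↦ F w / (1 - 𝓕 r w) := by
  obtain ⟨f, hf, rfl⟩ := hF
  have hr0 : 0 ≤ ∫ u, ‖r u‖ := integral_nonneg fun _ ↦ norm_nonneg _
  have hsum : Summable fun n ↦ ∫ u, ‖((r ⋆[.mul ℂ ℂ] ·)^[n] f) u‖ :=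
    .of_nonneg_of_le (fun n ↦ integral_nonneg fun _ ↦ norm_nonneg _)
      (fun n ↦ by simpa using integral_norm_iterate_convolution_le (.mul ℂ ℂ) hr hf n)
      ((summable_geometric_of_lt_one hr0 hr1).mul_right _)
  obtain ⟨g, hg, hgsum⟩ :=
    exists_hasSum_fourier (integrable_iterate_convolution (.mul ℂ ℂ) hr hf) hsum
  refine ⟨g, hg, funext fun w ↦ (hgsum w).unique ?_⟩
  have hrw : ‖𝓕 r w‖ < 1 := (norm_fourier_le_integral_norm r w).trans_lt hr1
  simp_rw [fourier_iterate_convolution hr hf, div_eq_inv_mul]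
  exact (hasSum_geometric_of_norm_lt_one hrw).mul_right _

lemma comp_smul (hF : MemFourierAlgebra F) {δ : ℝ} (hδ : δ ≠ 0) :
    MemFourierAlgebra fun w ↦ F (δ • w) := by
  obtain ⟨f, hf, rfl⟩ := hF
  exact ⟨dilate δ f, integrable_dilate hδ hf, funext (fourier_dilate hδ f)⟩

end MemFourierAlgebra

namespace MemFourierAlgebraAt

lemma congr (hF : MemFourierAlgebraAt F t) (h : F =ᶠ[𝓝 t] G) : MemFourierAlgebraAt G t :=
  let ⟨H, hH, hHF⟩ := hF
  ⟨H, hH, hHF.trans h⟩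

lemma mul (hF : MemFourierAlgebraAt F t) (hG : MemFourierAlgebraAt G t) :
    MemFourierAlgebraAt (F * G) t :=
  let ⟨_, hF', hFF'⟩ := hF
  let ⟨_, hG', hGG'⟩ := hG
  ⟨_, hF'.mul hG', hFF'.mul hGG'⟩

lemma add (hF : MemFourierAlgebraAt F t) (hG : MemFourierAlgebraAt G t) :
    MemFourierAlgebraAt (F + G) t := by
  obtain ⟨F', hF', hFF'⟩ := hF
  obtain ⟨G', hG', hGG'⟩ := hG
  exact ⟨_, hF'.add hG', hFF'.add hGG'⟩

lemma of_contDiff (hF : ContDiff ℝ ∞ F) (t : V) : MemFourierAlgebraAt F t := by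
  let χ : ContDiffBump t := ⟨1, 2, one_pos, one_lt_two⟩
  refine ⟨fun w ↦ χ w • F w, .of_contDiff (χ.contDiff.smul hF) χ.hasCompactSupport.smul_right, ?_⟩
  filter_upwards [χ.eventuallyEq_one] with w hw
  simp [hw]

lemma comp_add_right {s : V} (hF : MemFourierAlgebraAt F (t + s)) :
    MemFourierAlgebraAt (fun w ↦ F (w + s)) t :=
  let ⟨_, hG, hGF⟩ := hF
  ⟨_, hG.comp_add_right s, (continuous_add_const s).continuousAt.eventually hGF⟩

lemma comp_smul {δ : ℝ} (hδ : δ ≠ 0) (hF : MemFourierAlgebraAt F (δ • t)) :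
    MemFourierAlgebraAt (fun w ↦ F (δ • w)) t :=
  let ⟨_, hG, hGF⟩ := hF
  ⟨_, hG.comp_smul hδ, (continuous_const_smul δ).continuousAt.eventually hGF⟩

lemma inv_fourier_zero (hf : Integrable f) (hf1 : ∫ u, f u = 1) :
    MemFourierAlgebraAt (fun w ↦ (𝓕 f w)⁻¹) 0 := by
  obtain ⟨_, ⟨h, hh, rfl⟩, hh1⟩ := of_contDiff (V := V) (contDiff_const (c := (1 : ℂ))) 0
  obtain ⟨δ, hδ, hr1⟩ := exists_integral_norm_sub_dilate_convolution_lt hf hf1 hh one_pos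
  have hfδ := integrable_dilate hδ hf
  have hconv := hfδ.integrable_convolution (.mul ℂ ℂ) hh
  have hr := hh.sub hconv
  have hfourier (w : V) : 𝓕 (h - dilate δ f ⋆[.mul ℂ ℂ] h) w = 𝓕 h w - 𝓕 f (δ • w) * 𝓕 h w := by
    rw [fourier_sub hh hconv, Pi.sub_apply, fourier_mul_convolution_eq hfδ hh, fourier_dilate hδ]
  have hquot := MemFourierAlgebra.div_one_sub_fourier ⟨h, hh, rfl⟩ hr hr1
  have hinv : MemFourierAlgebraAt (fun w ↦ (𝓕 f (δ • w))⁻¹) 0 := by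
    refine ⟨_, hquot, ?_⟩
    filter_upwards [hh1] with w hw
    simp [hfourier, hw]
  rw [← smul_zero δ⁻¹] at hinv
  simpa only [smul_inv_smul₀ hδ] using hinv.comp_smul (inv_ne_zero hδ)

lemma inv (hF : MemFourierAlgebraAt F t) (ht : F t ≠ 0) : MemFourierAlgebraAt F⁻¹ t := by
  have hF0 : MemFourierAlgebraAt (fun w ↦ F (w + t)) 0 :=
    comp_add_right (by rwa [zero_add])
  obtain ⟨_, ⟨f, hf, rfl⟩, hfF⟩ := hF0
  have hf0 : ∫ u, f u = F t := by simpa [fourier_eq] using hfF.eq_of_nhds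
  have hnorm : ∫ u, (F t)⁻¹ * f u = 1 := by rw [integral_const_mul, hf0, inv_mul_cancel₀ ht]
  have hfourier (w : V) : 𝓕 (fun u ↦ (F t)⁻¹ * f u) w = (F t)⁻¹ * 𝓕 f w :=
    congrFun (VectorFourier.fourierIntegral_const_smul _ _ _ f (F t)⁻¹) w
  have hinv := (of_contDiff (contDiff_const (c := (F t)⁻¹)) 0).mul
    (inv_fourier_zero (hf.const_mul (F t)⁻¹) hnorm)
  have hshift : MemFourierAlgebraAt (fun w ↦ (F (w + t))⁻¹) 0 := by
    refine hinv.congr ?_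
    filter_upwards [hfF] with w hw
    simp only [Pi.mul_apply, hfourier, hw, mul_inv_rev, inv_inv]
    field_simp
  rw [← add_neg_cancel t] at hshift
  exact hshift.comp_add_right.congr (.of_eq (funext fun w ↦ by simp))

lemma exists_cutoff (hF : MemFourierAlgebraAt F t) :
    ∃ χ : V → ℂ, χ =ᶠ[𝓝 t] 1 ∧ MemFourierAlgebra χ ∧ MemFourierAlgebra (χ * F) := by
  obtain ⟨G, hG, hGF⟩ := hF
  obtain ⟨ε, hε, hball⟩ := Metric.eventually_nhds_iff_ball.1 hGF
  let b : ContDiffBump t := ⟨ε / 2, ε, half_pos hε, half_lt_self hε⟩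
  have hχ : MemFourierAlgebra fun w ↦ (b w : ℂ) :=
    .of_contDiff (ofRealCLM.contDiff.comp b.contDiff) (b.hasCompactSupport.comp_left ofReal_zero)
  refine ⟨fun w ↦ b w, ?_, hχ, ?_⟩
  · filter_upwards [b.eventuallyEq_one] with w hw
    simp [hw]
  · convert hχ.mul hG using 1
    ext w
    by_cases hw : w ∈ Metric.ball t ε
    · simp [hball w hw]
    · simp [b.zero_of_le_dist (not_lt.1 hw)]

end MemFourierAlgebraAt

lemma MemFourierAlgebra.of_memFourierAlgebraAt (hsupp : HasCompactSupport F)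
    (hF : ∀ t ∈ tsupport F, MemFourierAlgebraAt F t) : MemFourierAlgebra F := by
  suffices ∃ χ : V → ℂ, (∀ w ∈ tsupport F, χ w = 1) ∧ MemFourierAlgebra χ ∧
      MemFourierAlgebra (χ * F) by
    obtain ⟨χ, hχ, -, hχF⟩ := this
    convert hχF using 1
    ext w
    by_cases hw : w ∈ tsupport F
    · simp [hχ w hw]
    · simp [image_eq_zero_of_notMem_tsupport hw]
  refine hsupp.isCompact.induction_on
    (p := fun s ↦ ∃ χ : V → ℂ, (∀ w ∈ s, χ w = 1) ∧ MemFourierAlgebra χ ∧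
      MemFourierAlgebra (χ * F)) ?_ ?_ ?_ fun t ht ↦ ?_
  · have h0 : MemFourierAlgebra (0 : V → ℂ) := .of_contDiff contDiff_const .zero
    exact ⟨0, by simp, h0, by rwa [zero_mul]⟩
  · exact fun s s' hss' ⟨χ, hχ, h⟩ ↦ ⟨χ, fun w hw ↦ hχ w (hss' hw), h⟩
  · -- Two cutoffs glue through `1 - (1 - χ) * (1 - χ')`.
    rintro s s' ⟨χ, hχ, hχA, hχF⟩ ⟨χ', hχ', hχA', hχF'⟩
    refine ⟨χ + χ' - χ * χ', ?_, (hχA.add hχA').sub (hχA.mul hχA'), ?_⟩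
    · rintro w (hw | hw)
      · simp [hχ w hw]
      · simp [hχ' w hw]
    · rw [sub_mul, add_mul, mul_assoc]
      exact (hχF.add hχF').sub (hχA.mul hχF')
  · obtain ⟨χ, hχ, h⟩ := (hF t ht).exists_cutoff
    exact ⟨_, mem_nhdsWithin_of_mem_nhds hχ, χ, fun w hw ↦ hw, h⟩

lemma MemFourierAlgebra.div {φ : V → ℂ} (hφ : MemFourierAlgebra φ) (hsupp : HasCompactSupport φ)
    (hF : ∀ t ∈ tsupport φ, MemFourierAlgebraAt F t) (hF0 : ∀ t ∈ tsupport φ, F t ≠ 0) :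
    MemFourierAlgebra (φ / F) := by
  rw [div_eq_mul_inv]
  refine .of_memFourierAlgebraAt hsupp.mul_right fun t ht ↦ ?_
  have ht' : t ∈ tsupport φ := tsupport_mul_subset_left ht
  exact (hφ.memFourierAlgebraAt t).mul ((hF t ht').inv (hF0 t ht'))

end FourierAlgebra

section Angular

lemma integral_mul_cexp_eq_fourier (f : ℝ → ℂ) (t : ℝ) :
    ∫ u : ℝ, f u * cexp (-I * t * u) = 𝓕 f ((2 * π)⁻¹ * t) := by
  rw [Real.fourier_eq']
  congr 1
  ext u
  rw [smul_eq_mul, mul_comm]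
  congr 2
  simp only [RCLike.inner_apply, ringHom_apply, neg_mul, mul_inv_rev, ofReal_neg, ofReal_mul,
    ofReal_ofNat, ofReal_inv, neg_inj]
  field_simp

lemma memFourierAlgebra_iff_exists_integral_mul_cexp {F : ℝ → ℂ} :
    MemFourierAlgebra F ↔
      ∃ f : ℝ → ℂ, Integrable f ∧ ∀ t : ℝ, ∫ u : ℝ, f u * cexp (-I * t * u) = F t := by
  simp_rw [integral_mul_cexp_eq_fourier]
  constructor
  · intro hF
    obtain ⟨f, hf, hfF⟩ := hF.comp_smul two_pi_pos.ne'
    refine ⟨f, hf, fun t ↦ ?_⟩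
    rw [hfF]
    exact congrArg F (mul_inv_cancel_left₀ two_pi_pos.ne' t)
  · rintro ⟨f, hf, hfF⟩
    simpa only [smul_eq_mul, hfF] using
      MemFourierAlgebra.comp_smul ⟨f, hf, rfl⟩ (inv_ne_zero two_pi_pos.ne')

end Angular

theorem wiener_division_step_general {E : ℝ → ℂ} (hE : Integrable E) {a : ℂ} {c : ℝ}
    {φ : ℝ → ℂ} (hφ : ContDiff ℝ (⊤ : ℕ∞) φ) (hsupp : tsupport φ ⊆ Set.Ioo (-c) c)
    (hnv : ∀ t ∈ tsupport φ,
      (1 + t * I) * (I * t * (∫ u : ℝ, E u * cexp (-I * t * u)) + a) ≠ 0) :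
    ∃ f : ℝ → ℂ, Integrable f ∧
      (∀ t : ℝ, |t| < c →
        (∫ u : ℝ, f u * cexp (-I * t * u)) *
          ((1 + t * I) * (I * t * (∫ u : ℝ, E u * cexp (-I * t * u)) + a)) = φ t) ∧
      (∀ t : ℝ, c ≤ |t| → (∫ u : ℝ, f u * cexp (-I * t * u)) = 0) := by
  have hcompact : HasCompactSupport φ :=
    isCompact_Icc.of_isClosed_subset (isClosed_tsupport φ) (hsupp.trans Set.Ioo_subset_Icc_self)
  have hEhat : MemFourierAlgebra fun t : ℝ ↦ ∫ u : ℝ, E u * cexp (-I * t * u) :=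
    memFourierAlgebra_iff_exists_integral_mul_cexp.2 ⟨E, hE, fun _ ↦ rfl⟩
  have hlocal {F : ℝ → ℂ} (hF : ContDiff ℝ ∞ F) (t : ℝ) : MemFourierAlgebraAt F t :=
    .of_contDiff hF t
  have hofReal : ContDiff ℝ ∞ ofReal := ofRealCLM.contDiff
  have hsymbol (t : ℝ) : MemFourierAlgebraAt
      (fun t : ℝ ↦ (1 + t * I) * (I * t * (∫ u : ℝ, E u * cexp (-I * t * u)) + a)) t :=
    (hlocal (by fun_prop) t).mul
      (((hlocal (by fun_prop) t).mul (hEhat.memFourierAlgebraAt t)).add (hlocal contDiff_const t))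
  obtain ⟨f, hf, hquot⟩ := memFourierAlgebra_iff_exists_integral_mul_cexp.1 <|
    (MemFourierAlgebra.of_contDiff hφ hcompact).div hcompact (fun t _ ↦ hsymbol t) hnv
  have hφ0 {t : ℝ} (ht : t ∉ tsupport φ) : φ t = 0 := image_eq_zero_of_notMem_tsupport ht
  refine ⟨f, hf, fun t _ ↦ ?_, fun t ht ↦ ?_⟩
  · rw [hquot, Pi.div_apply]
    exact div_mul_cancel_of_imp fun h0 ↦ hφ0 fun ht ↦ hnv t ht h0
  · rw [hquot, Pi.div_apply, hφ0 fun hts ↦ ht.not_gt (abs_lt.2 (hsupp hts)), zero_div]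

/-- **Wiener division step.** If the boundary value `(1+it)(itÊ₁(t) + a)` of `(s-1)ζ(s)`
does not vanish for `|t| < 3c`, then for any smooth `φ` supported in `(-c, c)` there is
`f ∈ L¹` whose Fourier transform satisfies `f̂(t)·(1+it)(itÊ₁(t)+a) = φ(t)` for `|t| < c`
and `f̂(t) = 0` for `|t| ≥ c`. -/
theorem wiener_division_step
    (p : ℕ → ℝ) (hmono : Monotone p) (hp1 : 1 < p 0) (hptop : Tendsto p atTop atTop)
    (a : ℝ) (ha : 0 < a) (hE₁ : Integrable (beurlingE₁ p a))
    (c : ℝ) (hc : 0 < c)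
    (hnv : ∀ t : ℝ, |t| < 3 * c →
      (1 + t * Complex.I) * (Complex.I * t * beurlingE₁FT p a t + a) ≠ 0) :
    ∀ φ : ℝ → ℂ, ContDiff ℝ (⊤ : ℕ∞) φ → tsupport φ ⊆ Set.Ioo (-c) c →
      ∃ f : ℝ → ℂ, Integrable f ∧
        (∀ t : ℝ, |t| < c →
          (∫ u : ℝ, f u * Complex.exp (-Complex.I * t * u)) *
            ((1 + t * Complex.I) * (Complex.I * t * beurlingE₁FT p a t + a)) = φ t) ∧
        (∀ t : ℝ, c ≤ |t| →
          (∫ u : ℝ, f u * Complex.exp (-Complex.I * t * u)) = 0) := by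
  intro φ hφ hsupp
  exact wiener_division_step_general hE₁.ofReal hφ hsupp fun t ht ↦
    hnv t ((abs_lt.2 (hsupp ht)).trans (by linarith))
end

section
/- Suppose a > 0 and the function E₁ defined by E₁(u) = e^{−u} N(e^u) − a for u > 0 and E₁(u) = 0 for u ≤ 0 is integrable on ℝ; let Ê₁(t) = ∫_ℝ E₁(u) e^{−itu} du. Let c > 0 and let η : ℝ → ℝ be smooth, even, supported in (−3c, 3c), with η(t) = 1 for |t| ≤ 2c. Let χ₁ and χ₂ be the Schwartz functions whose Fourier transforms are χ̂₁(t) = it(1 + it)η(t) and χ̂₂(t) = a(1 + it)η(t). Then the function χ₁ ∗ E₁ + χ₂ is integrable on ℝ and its Fourier transform at t equals η(t) · (1 + it)(it Ê₁(t) + a), i.e., the boundary value η(t)·it·ζ(1 + it). -/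
open MeasureTheory Real Filter Complex

open scoped Convolution FourierTransform

/-- The Fourier transform `f̂(t) = ∫ f(u) e^{-itu} du` in terms of the angular frequency `t`.
Mathlib's `𝓕` has kernel `e^{-2πiwu}` instead. -/
noncomputable def angularFourier (f : ℝ → ℂ) (t : ℝ) : ℂ :=
  ∫ u : ℝ, f u * Complex.exp (-Complex.I * t * u)

theorem angularFourier_eq_fourier (f : ℝ → ℂ) (t : ℝ) :
    angularFourier f t = 𝓕 f (t / (2 * π)) := by
  rw [angularFourier, fourier_real_eq_integral_exp_smul]
  refine integral_congr_ae (.of_forall fun u ↦ ?_)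
  have phase_eq : ((-2 * π * u * (t / (2 * π)) : ℝ) : ℂ) * Complex.I = -Complex.I * t * u := by
    push_cast
    field_simp
  simp only [phase_eq, smul_eq_mul, mul_comm (f u)]

theorem fourier_add_of_integrable {V F : Type*} [NormedAddCommGroup V] [InnerProductSpace ℝ V]
    [FiniteDimensional ℝ V] [MeasurableSpace V] [BorelSpace V] [NormedAddCommGroup F]
    [NormedSpace ℂ F] {f g : V → F} (hf : Integrable f) (hg : Integrable g) (w : V) :
    𝓕 (f + g) w = 𝓕 f w + 𝓕 g w :=
  congrFun (VectorFourier.fourierIntegral_add (L := innerₗ V)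
    continuous_fourierChar continuous_inner hf hg) w

theorem angularFourier_add {f g : ℝ → ℂ} (hf : Integrable f) (hg : Integrable g) (t : ℝ) :
    angularFourier (f + g) t = angularFourier f t + angularFourier g t := by
  simp only [angularFourier_eq_fourier, fourier_add_of_integrable hf hg]

theorem angularFourier_convolution {f g : ℝ → ℂ} (hf : Integrable f) (hg : Integrable g) (t : ℝ) :
    angularFourier (f ⋆[.mul ℂ ℂ] g) t = angularFourier f t * angularFourier g t := by
  simp only [angularFourier_eq_fourier, fourier_mul_convolution_eq hf hg]

theorem cutoff_boundary_is_L1_fourier_transform_general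
    {f χ₁ χ₂ : ℝ → ℂ} (hf : Integrable f) (hχ₁ : Integrable χ₁) (hχ₂ : Integrable χ₂)
    (a : ℂ) (η : ℝ → ℂ)
    (hχ₁_fourier : ∀ t : ℝ,
      angularFourier χ₁ t = Complex.I * t * (1 + Complex.I * t) * η t)
    (hχ₂_fourier : ∀ t : ℝ, angularFourier χ₂ t = a * (1 + Complex.I * t) * η t) :
    Integrable (fun u ↦ (χ₁ ⋆[.mul ℂ ℂ] f) u + χ₂ u) ∧
      ∀ t : ℝ, angularFourier (fun u ↦ (χ₁ ⋆[.mul ℂ ℂ] f) u + χ₂ u) t =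
        η t * ((1 + Complex.I * t) * (Complex.I * t * angularFourier f t + a)) := by
  have hconv : Integrable (χ₁ ⋆[.mul ℂ ℂ] f) := hχ₁.integrable_convolution _ hf
  refine ⟨hconv.add hχ₂, fun t ↦ ?_⟩
  calc angularFourier (χ₁ ⋆[.mul ℂ ℂ] f + χ₂) t
      = angularFourier χ₁ t * angularFourier f t + angularFourier χ₂ t := by
        rw [angularFourier_add hconv hχ₂, angularFourier_convolution hχ₁ hf]
    _ = η t * ((1 + Complex.I * t) * (Complex.I * t * angularFourier f t + a)) := by
        rw [hχ₁_fourier, hχ₂_fourier]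
        ring

/-- The cut-off boundary value `η(t)·it·ζ(1+it) = η(t)(1+it)(itÊ₁(t)+a)` is the Fourier
transform of the `L¹`-function `χ₁ ∗ E₁ + χ₂`, where `χ̂₁(t) = it(1+it)η(t)` and
`χ̂₂(t) = a(1+it)η(t)`. -/
theorem cutoff_boundary_is_L1_fourier_transform
    (p : ℕ → ℝ) (hmono : Monotone p) (hp1 : 1 < p 0) (hptop : Tendsto p atTop atTop)
    (a : ℝ) (ha : 0 < a) (hE₁ : Integrable (beurlingE₁ p a))
    (c : ℝ) (hc : 0 < c)
    (η : ℝ → ℝ) (hη : ContDiff ℝ (⊤ : ℕ∞) η) (hηeven : ∀ t, η (-t) = η t)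
    (hηsupp : tsupport η ⊆ Set.Ioo (-(3 * c)) (3 * c))
    (hηone : ∀ t : ℝ, |t| ≤ 2 * c → η t = 1)
    (χ₁ χ₂ : SchwartzMap ℝ ℂ)
    (hχ₁ : ∀ t : ℝ, (∫ u : ℝ, χ₁ u * Complex.exp (-Complex.I * t * u)) =
      Complex.I * t * (1 + Complex.I * t) * (η t : ℂ))
    (hχ₂ : ∀ t : ℝ, (∫ u : ℝ, χ₂ u * Complex.exp (-Complex.I * t * u)) =
      (a : ℂ) * (1 + Complex.I * t) * (η t : ℂ)) :
    Integrable (fun u : ℝ => (∫ v : ℝ, χ₁ (u - v) * (beurlingE₁ p a v : ℂ)) + χ₂ u) ∧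
      ∀ t : ℝ,
        (∫ u : ℝ, ((∫ v : ℝ, χ₁ (u - v) * (beurlingE₁ p a v : ℂ)) + χ₂ u) *
            Complex.exp (-Complex.I * t * u)) =
          (η t : ℂ) * ((1 + Complex.I * t) * (Complex.I * t * beurlingE₁FT p a t + a)) := by
  simpa only [angularFourier, beurlingE₁FT, convolution_mul_swap] using
    cutoff_boundary_is_L1_fourier_transform_general
      (f := fun u ↦ beurlingE₁ p a u) hE₁.ofReal χ₁.integrable χ₂.integrable
      a (fun t ↦ η t) hχ₁ hχ₂
end

section
/- For every c > 0 there exists a smooth compactly supported function φ : ℝ → ℂ, not identically zero, with support contained in (−c, c), such that its Fourier transform φ̂(u) = ∫_ℝ φ(t) e^{−iut} dt is real and nonnegative for all u ∈ ℝ and satisfies ∫₀^∞ e^{−u} φ̂(u) du > 0. -/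
open MeasureTheory Real Filter Complex

/-- The Fourier transform `φ̂(u) = ∫ φ(t) e^{-iut} dt` of a test function. -/
noncomputable def testFT (φ : ℝ → ℂ) (u : ℝ) : ℂ :=
  ∫ t : ℝ, φ t * Complex.exp (-Complex.I * u * t)

/-!
Take a bump function `f` supported near `0` and let `φ = f ⋆ f*`, where `f*(t) = conj (f (-t))`.
Then `φ̂ = f̂ · conj f̂ = |f̂|² ≥ 0`. Since `φ̂(0) = |∫ f|² > 0` and `φ̂` is continuous, `φ` is not
zero and the integral of `e^{-u} φ̂(u)` over the half-line is positive.
-/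

open scoped ComplexConjugate Convolution Pointwise

section TestFT

variable {φ ψ : ℝ → ℂ}

theorem testFT_eq_fourier (φ : ℝ → ℂ) (u : ℝ) :
    testFT φ u = FourierTransform.fourier φ (u / (2 * π)) := by
  rw [testFT, Real.fourier_real_eq_integral_exp_smul]
  congr 1 with t
  rw [smul_eq_mul, mul_comm]
  congr 2
  have hπ : (π : ℂ) ≠ 0 := mod_cast Real.pi_ne_zero
  push_cast
  field_simp

theorem testFT_zero_right (φ : ℝ → ℂ) : testFT φ 0 = ∫ t, φ t := by
  simp [testFT]

theorem norm_testFT_le (φ : ℝ → ℂ) (u : ℝ) : ‖testFT φ u‖ ≤ ∫ t, ‖φ t‖ :=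
  calc ‖testFT φ u‖
      ≤ ∫ t : ℝ, ‖φ t * Complex.exp (-Complex.I * u * t)‖ := norm_integral_le_integral_norm _
    _ = ∫ t, ‖φ t‖ := by simp [Complex.norm_exp]

theorem continuous_testFT (hφ : Integrable φ) : Continuous (testFT φ) := by
  have hfourier : Continuous (FourierTransform.fourier φ) :=
    VectorFourier.fourierIntegral_continuous (L := innerₗ ℝ) Real.continuous_fourierChar
      continuous_inner hφ
  rw [funext (testFT_eq_fourier φ)]
  exact hfourier.comp (continuous_id.div_const _)

theorem testFT_convolution (hφ : Integrable φ) (hψ : Integrable ψ) (u : ℝ) :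
    testFT (φ ⋆[ContinuousLinearMap.mul ℝ ℂ] ψ) u = testFT φ u * testFT ψ u := by
  simp only [testFT_eq_fourier]
  exact Real.fourier_mul_convolution_eq hφ hψ _

end TestFT

section Positivity

theorem setIntegral_Ioi_pos_of_continuousWithinAt {μ : Measure ℝ} [μ.IsOpenPosMeasure]
    {F : ℝ → ℝ} {a : ℝ} (hint : IntegrableOn F (Set.Ioi a) μ)
    (hcont : ContinuousWithinAt F (Set.Ioi a) a) (hnonneg : ∀ x ∈ Set.Ioi a, 0 ≤ F x)
    (ha : 0 < F a) : 0 < ∫ x in Set.Ioi a, F x ∂μ := by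
  obtain ⟨b, hab, hpos⟩ : ∃ b ∈ Set.Ioi a, Set.Ioo a b ⊆ {x | 0 < F x} :=
    mem_nhdsGT_iff_exists_Ioo_subset.1 (hcont.eventually_const_lt ha)
  rw [setIntegral_pos_iff_support_of_nonneg_ae (ae_restrict_of_forall_mem measurableSet_Ioi hnonneg)
    hint]
  have hsub : Set.Ioo a b ⊆ Function.support F ∩ Set.Ioi a := fun x hx ↦ ⟨(hpos hx).ne', hx.1⟩
  exact (isOpen_Ioo.measure_pos μ (Set.nonempty_Ioo.2 hab)).trans_le (measure_mono hsub)

variable {φ : ℝ → ℂ}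

theorem integrableOn_exp_neg_mul_re_testFT (hφ : Integrable φ) (a : ℝ) :
    IntegrableOn (fun u ↦ Real.exp (-u) * (testFT φ u).re) (Set.Ioi a) :=
  (integrableOn_exp_neg_Ioi a).mul_bdd
    (Complex.continuous_re.comp (continuous_testFT hφ)).aestronglyMeasurable
    (ae_of_all _ fun u ↦ (Complex.abs_re_le_norm _).trans (norm_testFT_le φ u))

theorem setIntegral_exp_neg_mul_re_testFT_pos (hφ : Integrable φ)
    (hnonneg : ∀ u ∈ Set.Ioi (0 : ℝ), 0 ≤ (testFT φ u).re) (hpos : 0 < (testFT φ 0).re) :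
    0 < ∫ u in Set.Ioi (0 : ℝ), Real.exp (-u) * (testFT φ u).re := by
  have hcont : Continuous fun u ↦ Real.exp (-u) * (testFT φ u).re :=
    (Real.continuous_exp.comp continuous_neg).mul
      (Complex.continuous_re.comp (continuous_testFT hφ))
  exact setIntegral_Ioi_pos_of_continuousWithinAt (integrableOn_exp_neg_mul_re_testFT hφ 0)
    hcont.continuousWithinAt (fun u hu ↦ mul_nonneg (Real.exp_pos _).le (hnonneg u hu))
    (mul_pos (Real.exp_pos _) hpos)

end Positivity

section ConjReflection

/-- The involution `f*(x) = conj (f (-x))` of the convolution algebra, which the Fourier transform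
turns into complex conjugation. -/
def conjReflection {G : Type*} [Neg G] (f : G → ℂ) (x : G) : ℂ := conj (f (-x))

theorem testFT_conjReflection (f : ℝ → ℂ) (u : ℝ) :
    testFT (conjReflection f) u = conj (testFT f u) := by
  rw [testFT, testFT, ← integral_conj,
    ← integral_neg_eq_self (fun t : ℝ ↦ conj (f t * Complex.exp (-Complex.I * u * t)))]
  simp [conjReflection, ← Complex.exp_conj]

theorem tsupport_conjReflection {G : Type*} [TopologicalSpace G] [InvolutiveNeg G]
    [ContinuousNeg G] (f : G → ℂ) : tsupport (conjReflection f) = -tsupport f :=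
  calc tsupport (conjReflection f)
      = tsupport (f ∘ Homeomorph.neg G) := tsupport_comp_eq (by simp) _
    _ = -tsupport f := tsupport_comp_eq_preimage f (Homeomorph.neg G)

theorem hasCompactSupport_conjReflection {G : Type*} [TopologicalSpace G] [InvolutiveNeg G]
    [ContinuousNeg G] {f : G → ℂ} (hf : HasCompactSupport f) :
    HasCompactSupport (conjReflection f) := by
  rw [HasCompactSupport, tsupport_conjReflection]
  exact hf.isCompact.neg

theorem contDiff_conjReflection {E : Type*} [NormedAddCommGroup E] [NormedSpace ℝ E]
    {f : E → ℂ} {n : WithTop ℕ∞} (hf : ContDiff ℝ n f) : ContDiff ℝ n (conjReflection f) :=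
  Complex.conjCLE.contDiff.comp (hf.comp contDiff_neg)

theorem integrable_conjReflection {G : Type*} [MeasurableSpace G] [AddGroup G] [MeasurableNeg G]
    {μ : Measure G} [μ.IsNegInvariant] {f : G → ℂ} (hf : Integrable f μ) :
    Integrable (conjReflection f) μ :=
  Complex.conjCLE.toContinuousLinearMap.integrable_comp hf.comp_neg

end ConjReflection

theorem tsupport_convolution_subset_add {𝕜 G E E' F : Type*} [NontriviallyNormedField 𝕜]
    [NormedAddCommGroup E] [NormedAddCommGroup E'] [NormedAddCommGroup F]
    [NormedSpace 𝕜 E] [NormedSpace 𝕜 E'] [NormedSpace 𝕜 F] [NormedSpace ℝ F]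
    [AddCommGroup G] [TopologicalSpace G] [IsTopologicalAddGroup G] [MeasurableSpace G]
    {μ : Measure G} (L : E →L[𝕜] E' →L[𝕜] F) {f : G → E} {g : G → E'}
    (hf : HasCompactSupport f) :
    tsupport (f ⋆[L, μ] g) ⊆ tsupport f + tsupport g :=
  closure_minimal
    ((support_convolution_subset L).trans
      (Set.add_subset_add (subset_tsupport f) (subset_tsupport g)))
    ((isClosed_tsupport g).add_left_of_isCompact hf.isCompact)

section Autocorrelation

/-- The autocorrelation `f ⋆ f*` of `f`, the function whose Fourier transform is `|f̂|²`. -/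
noncomputable def autocorrelation {G : Type*} [AddCommGroup G] [MeasureSpace G] (f : G → ℂ) :
    G → ℂ :=
  f ⋆[ContinuousLinearMap.mul ℝ ℂ] conjReflection f

theorem testFT_autocorrelation {f : ℝ → ℂ} (hf : Integrable f) (u : ℝ) :
    testFT (autocorrelation f) u = (Complex.normSq (testFT f u) : ℂ) := by
  rw [autocorrelation, testFT_convolution hf (integrable_conjReflection hf),
    testFT_conjReflection, Complex.mul_conj]

theorem integrable_autocorrelation {G : Type*} [AddCommGroup G] [MeasureSpace G]
    [MeasurableAdd₂ G] [MeasurableNeg G] [SFinite (volume : Measure G)]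
    [(volume : Measure G).IsAddRightInvariant] [(volume : Measure G).IsNegInvariant]
    {f : G → ℂ} (hf : Integrable f) : Integrable (autocorrelation f) :=
  hf.integrable_convolution _ (integrable_conjReflection hf)

theorem contDiff_autocorrelation {E : Type*} [NormedAddCommGroup E] [NormedSpace ℝ E]
    [MeasureSpace E] [BorelSpace E] {f : E → ℂ} {n : ℕ∞} (hfc : HasCompactSupport f)
    (hfi : LocallyIntegrable f) (hf : ContDiff ℝ n f) : ContDiff ℝ n (autocorrelation f) :=
  (hasCompactSupport_conjReflection hfc).contDiff_convolution_right _ hfi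
    (contDiff_conjReflection hf)

theorem tsupport_autocorrelation_subset {E : Type*} [NormedAddCommGroup E] [NormedSpace ℝ E]
    [ProperSpace E] [MeasureSpace E] {f : E → ℂ} {r : ℝ} (hr : 0 ≤ r)
    (hf : tsupport f ⊆ Metric.closedBall 0 r) :
    tsupport (autocorrelation f) ⊆ Metric.closedBall 0 (r + r) := by
  have hfc : HasCompactSupport f :=
    (isCompact_closedBall 0 r).of_isClosed_subset (isClosed_tsupport f) hf
  calc tsupport (autocorrelation f)
      ⊆ tsupport f + -tsupport f := by
        rw [← tsupport_conjReflection]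
        exact tsupport_convolution_subset_add _ hfc
    _ ⊆ Metric.closedBall 0 r + -Metric.closedBall 0 r :=
        Set.add_subset_add hf (Set.neg_subset_neg.2 hf)
    _ = Metric.closedBall 0 (r + r) := by
        rw [neg_closedBall, neg_zero, closedBall_add_closedBall hr hr, add_zero]

end Autocorrelation

theorem exists_contDiff_tsupport_subset_closedBall_integral_ne_zero {E : Type*}
    [NormedAddCommGroup E] [NormedSpace ℝ E] [FiniteDimensional ℝ E] [MeasurableSpace E]
    [BorelSpace E] (μ : Measure E) [IsLocallyFiniteMeasure μ] [μ.IsOpenPosMeasure] (n : ℕ∞)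
    (x : E) {r : ℝ} (hr : 0 < r) :
    ∃ f : E → ℂ, ContDiff ℝ n f ∧ tsupport f ⊆ Metric.closedBall x r ∧ ∫ y, f y ∂μ ≠ 0 := by
  let b : ContDiffBump x := ⟨r / 2, r, half_pos hr, half_lt_self hr⟩
  refine ⟨fun y ↦ b y, Complex.ofRealCLM.contDiff.comp b.contDiff, ?_, ?_⟩
  · exact (tsupport_comp_subset Complex.ofReal_zero b).trans b.tsupport_eq.subset
  · rw [integral_complex_ofReal]
    exact mod_cast b.integral_pos.ne'

/-- For every `c > 0` there is a nonzero smooth function `φ` supported in `(-c, c)`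
whose Fourier transform is real and nonnegative, with `∫₀^∞ e^{-u} φ̂(u) du > 0`. -/
theorem exists_testfunction_nonneg_fourier (c : ℝ) (hc : 0 < c) :
    ∃ φ : ℝ → ℂ, ContDiff ℝ (⊤ : ℕ∞) φ ∧ φ ≠ 0 ∧ tsupport φ ⊆ Set.Ioo (-c) c ∧
      (∀ u : ℝ, (testFT φ u).im = 0 ∧ 0 ≤ (testFT φ u).re) ∧
      0 < ∫ u in Set.Ioi (0 : ℝ), Real.exp (-u) * (testFT φ u).re := by
  have hr : 0 < c / 3 := by positivity
  obtain ⟨f, hf, hsupp, hf0⟩ :=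
    exists_contDiff_tsupport_subset_closedBall_integral_ne_zero volume ⊤ (0 : ℝ) hr
  have hfc : HasCompactSupport f :=
    (isCompact_closedBall 0 (c / 3)).of_isClosed_subset (isClosed_tsupport f) hsupp
  have hfi : Integrable f := hf.continuous.integrable_of_hasCompactSupport hfc
  have hnonneg (u : ℝ) : 0 ≤ (testFT (autocorrelation f) u).re := by
    simpa only [testFT_autocorrelation hfi, Complex.ofReal_re] using Complex.normSq_nonneg _
  have hpos : 0 < (testFT (autocorrelation f) 0).re := by
    simpa only [testFT_autocorrelation hfi, Complex.ofReal_re, testFT_zero_right] using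
      Complex.normSq_pos.2 hf0
  refine ⟨autocorrelation f, contDiff_autocorrelation hfc hfi.locallyIntegrable hf, ?_, ?_,
    fun u ↦ ⟨?_, hnonneg u⟩,
    setIntegral_exp_neg_mul_re_testFT_pos (integrable_autocorrelation hfi) (fun u _ ↦ hnonneg u)
      hpos⟩
  · intro hzero
    simp [hzero, testFT] at hpos
  · refine (tsupport_autocorrelation_subset hr.le hsupp).trans ?_
    rw [Real.closedBall_eq_Icc]
    exact Set.Icc_subset_Ioo (by linarith) (by linarith)
  · rw [testFT_autocorrelation hfi, Complex.ofReal_im]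
end
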